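/- Let φ be the indicator of the Euclidean ball of radius R > 0 in ℝ^d. Then for n ≥ 3, φ^{⋆n}(0) = d · 2^{d(n/2-1)} · Γ(d/2+1)^{n-2} · ∫_0^∞ x^{-1-d(n/2-1)} (J_{d/2}(x))^n dx, when R = R(d) = π^{-1/2} Γ(d/2+1)^{1/d} is chosen so the ball has unit volume. -/

import Mathlib

open MeasureTheory Real

noncomputable def conv {d : ℕ} (f g : EuclideanSpace ℝ (Fin d) → ℝ)
    (x : EuclideanSpace ℝ (Fin d)) : ℝ := ∫ u, f (x - u) * g u

/-- `iterConv f n` is the `(n+1)`-fold self-convolution of `f`, so `iterConv f 0 = f`. -/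
noncomputable def iterConv {d : ℕ} (f : EuclideanSpace ℝ (Fin d) → ℝ) :
    ℕ → EuclideanSpace ℝ (Fin d) → ℝ
  | 0 => f
  | n + 1 => conv (iterConv f n) f

/-- The Bessel function of the first kind of order `ν`, via its power series (for `x ≥ 0`). -/
noncomputable def besselJ (ν x : ℝ) : ℝ :=
  ∑' m : ℕ, ((-1 : ℝ) ^ m / ((Nat.factorial m : ℝ) * Real.Gamma ((m : ℝ) + ν + 1))) *
    (x / 2) ^ (2 * (m : ℝ) + ν)

/-- Integration in polar coordinates of a homogeneous function times a radial one. -/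
lemma integral_homogeneous_mul_fun_norm {E : Type*} [NormedAddCommGroup E] [NormedSpace ℝ E]
    [MeasurableSpace E] [BorelSpace E] [FiniteDimensional ℝ E] [Nontrivial E]
    (μ : Measure E) [μ.IsAddHaarMeasure] (g : E → ℝ) (k : ℕ)
    (hg : ∀ r : ℝ, 0 < r → ∀ x, g (r • x) = r ^ k * g x) (h : ℝ → ℝ) :
    ∫ x, g x * h ‖x‖ ∂μ = (∫ ω, g (ω : E) ∂μ.toSphere) *
      ∫ r in Set.Ioi (0 : ℝ), r ^ (k + (Module.finrank ℝ E - 1)) * h r := by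
  calc
    ∫ x, g x * h ‖x‖ ∂μ
        = ∫ x : ({(0)}ᶜ : Set E), g x.1 * h ‖x.1‖ ∂(μ.comap (↑)) := by
      rw [integral_subtype_comap (measurableSet_singleton _).compl fun x ↦ g x * h ‖x‖,
        restrict_compl_singleton]
    _ = ∫ x : Metric.sphere (0 : E) 1 × Set.Ioi (0 : ℝ), g x.1 * ((x.2 : ℝ) ^ k * h x.2)
          ∂μ.toSphere.prod (.volumeIoiPow (Module.finrank ℝ E - 1)) := by
      rw [← μ.measurePreserving_homeomorphUnitSphereProd.integral_comp
        (Homeomorph.measurableEmbedding _)]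
      refine integral_congr_ae (.of_forall fun x ↦ ?_)
      have hx : 0 < ‖(x : E)‖ := norm_pos_iff.2 x.2
      have := hg ‖(x : E)‖ hx ((‖(x : E)‖)⁻¹ • (x : E))
      rw [smul_inv_smul₀ hx.ne'] at this
      simp only [homeomorphUnitSphereProd_apply_snd_coe, homeomorphUnitSphereProd_apply_fst_coe]
      rw [this]; ring
    _ = (∫ ω, g (ω : E) ∂μ.toSphere) * ∫ x : Set.Ioi (0 : ℝ), (x : ℝ) ^ k * h x
          ∂.volumeIoiPow (Module.finrank ℝ E - 1) :=
      integral_prod_mul (fun ω : Metric.sphere (0 : E) 1 ↦ g ω)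
        (fun x : Set.Ioi (0 : ℝ) ↦ (x : ℝ) ^ k * h x)
    _ = _ := by
      simp only [Measure.volumeIoiPow, ENNReal.ofReal]
      rw [integral_withDensity_eq_integral_smul,
        integral_subtype_comap measurableSet_Ioi
          fun a ↦ Real.toNNReal (a ^ (Module.finrank ℝ E - 1)) • (a ^ k * h a),
        setIntegral_congr_fun measurableSet_Ioi fun x hx ↦ ?_]
      · rw [NNReal.smul_def, Real.coe_toNNReal _ (pow_nonneg hx.out.le _), smul_eq_mul, pow_add]
        ring
      · exact (measurable_subtype_coe.pow_const _).real_toNNReal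

lemma integral_pow_mul_exp_neg_sq_Ioi (k : ℕ) :
    ∫ r in Set.Ioi (0 : ℝ), r ^ k * exp (-r ^ 2) = Gamma (((k : ℝ) + 1) / 2) / 2 := by
  have := integral_rpow_mul_exp_neg_rpow (p := 2) (q := k) two_pos
    (by have : (0 : ℝ) ≤ k := k.cast_nonneg; linarith)
  simp only [rpow_natCast, rpow_two] at this
  rw [this]; ring

lemma integral_pow_mul_indicator_Ioi (k : ℕ) {R : ℝ} (hR : 0 < R) :
    ∫ r in Set.Ioi (0 : ℝ), r ^ k * (if r < R then 1 else 0) = R ^ (k + 1) / (k + 1) := by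
  have h1 : ∀ r : ℝ, r ^ k * (if r < R then 1 else 0) = (Set.Iio R).indicator (fun r ↦ r ^ k) r :=
    fun r ↦ by by_cases h : r < R <;> simp [h]
  simp_rw [h1]
  rw [setIntegral_indicator measurableSet_Iio, Set.Ioi_inter_Iio, ← integral_Ioc_eq_integral_Ioo,
    ← intervalIntegral.integral_of_le hR.le, integral_pow]
  simp

lemma integral_even_pow_mul_exp_neg_sq (m : ℕ) :
    ∫ x : ℝ, x ^ (2 * m) * exp (-x ^ 2) = Gamma ((m : ℝ) + 1 / 2) := by
  have := integral_comp_abs (f := fun x : ℝ ↦ x ^ (2 * m) * exp (-x ^ 2))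
  simp only [pow_mul, sq_abs] at this
  simp only [pow_mul]
  rw [this]
  simp only [← pow_mul]
  rw [integral_pow_mul_exp_neg_sq_Ioi]
  push_cast
  ring_nf

lemma integral_coord_pow_mul_exp_neg_sq_norm {ι : Type*} [Fintype ι] (i : ι) (m : ℕ) :
    ∫ x : EuclideanSpace ℝ ι, x i ^ (2 * m) * exp (-‖x‖ ^ 2) =
      Gamma ((m : ℝ) + 1 / 2) * √π ^ (Fintype.card ι - 1) := by
  classical
  rw [← (PiLp.volume_preserving_toLp ι).integral_comp
    (MeasurableEquiv.toLp 2 _).measurableEmbedding]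
  have h1 (x : ι → ℝ) : (WithLp.toLp 2 x : EuclideanSpace ℝ ι) i ^ (2 * m) *
      exp (-‖(WithLp.toLp 2 x : EuclideanSpace ℝ ι)‖ ^ 2) =
      ∏ j, (if j = i then x j ^ (2 * m) else 1) * exp (-x j ^ 2) := by
    rw [Finset.prod_mul_distrib, ← exp_sum, EuclideanSpace.norm_sq_eq]
    simp
  simp_rw [h1]
  rw [integral_fintype_prod_volume_eq_prod
    (f := fun j (t : ℝ) ↦ (if j = i then t ^ (2 * m) else 1) * exp (-t ^ 2)),
    ← Finset.mul_prod_erase _ _ (Finset.mem_univ i)]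
  congr 1
  · simpa using integral_even_pow_mul_exp_neg_sq m
  · rw [Finset.prod_congr rfl (g := fun _ ↦ √π), Finset.prod_const,
      Finset.card_erase_of_mem (Finset.mem_univ i), Finset.card_univ]
    intro j hj
    simpa [Finset.ne_of_mem_erase hj] using integral_gaussian 1

lemma integral_inner_pow_mul_exp_neg_sq_norm {d : ℕ} (hd : 0 < d)
    (ξ : EuclideanSpace ℝ (Fin d)) (m : ℕ) :
    ∫ x : EuclideanSpace ℝ (Fin d), inner ℝ x ξ ^ (2 * m) * exp (-‖x‖ ^ 2) =
      ‖ξ‖ ^ (2 * m) * (Gamma ((m : ℝ) + 1 / 2) * √π ^ (d - 1)) := by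
  let i : Fin d := ⟨0, hd⟩
  obtain ⟨b, hb⟩ : ∃ b : OrthonormalBasis (Fin d) ℝ (EuclideanSpace ℝ (Fin d)),
      ξ = ‖ξ‖ • b i := by
    rcases eq_or_ne ξ 0 with rfl | h
    · exact ⟨EuclideanSpace.basisFun _ _, by simp⟩
    · have hv : Orthonormal ℝ (({i} : Set (Fin d)).domRestrict fun _ ↦ ‖ξ‖⁻¹ • ξ) := by
        refine ⟨fun _ ↦ ?_, fun j k hjk ↦ (hjk (Subsingleton.elim _ _)).elim⟩
        simp [norm_smul, h]
      obtain ⟨b, hb⟩ := hv.exists_orthonormalBasis_extension_of_card_eq (by simp)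
      exact ⟨b, by rw [hb i rfl, smul_inv_smul₀ (norm_ne_zero_iff.2 h)]⟩
  have h1 (x : EuclideanSpace ℝ (Fin d)) : inner ℝ x ξ ^ (2 * m) * exp (-‖x‖ ^ 2) =
      ‖ξ‖ ^ (2 * m) * (b.repr x i ^ (2 * m) * exp (-‖b.repr x‖ ^ 2)) := by
    rw [b.repr_apply_apply, LinearIsometryEquiv.norm_map, real_inner_comm]
    conv_lhs => rw [hb, real_inner_smul_left, mul_pow]
    ring
  simp_rw [h1]
  rw [integral_const_mul, b.measurePreserving_repr.integral_comp
    b.repr.toHomeomorph.measurableEmbedding (fun y ↦ y i ^ (2 * m) * exp (-‖y‖ ^ 2)),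
    integral_coord_pow_mul_exp_neg_sq_norm, Fintype.card_fin]

lemma integral_inner_pow_mul_indicator_ball {d : ℕ} (hd : 0 < d) {R : ℝ} (hR : 0 < R)
    (ξ : EuclideanSpace ℝ (Fin d)) (m : ℕ) :
    ∫ x : EuclideanSpace ℝ (Fin d), inner ℝ x ξ ^ (2 * m) * (if ‖x‖ < R then 1 else 0) =
      ‖ξ‖ ^ (2 * m) * R ^ (2 * m + d) * √π ^ (d - 1) * Gamma ((m : ℝ) + 1 / 2) /
        Gamma ((m : ℝ) + d / 2 + 1) := by
  have : NeZero d := ⟨hd.ne'⟩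
  have hg (r : ℝ) (_ : 0 < r) (x : EuclideanSpace ℝ (Fin d)) :
      inner ℝ (r • x) ξ ^ (2 * m) = r ^ (2 * m) * inner ℝ x ξ ^ (2 * m) := by
    rw [real_inner_smul_left, mul_pow]
  have e1 := integral_homogeneous_mul_fun_norm volume (inner ℝ · ξ ^ (2 * m)) (2 * m) hg
    fun r ↦ if r < R then 1 else 0
  have e2 := integral_homogeneous_mul_fun_norm volume (inner ℝ · ξ ^ (2 * m)) (2 * m) hg
    fun r ↦ exp (-r ^ 2)
  rw [integral_inner_pow_mul_exp_neg_sq_norm hd, integral_pow_mul_exp_neg_sq_Ioi] at e2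
  rw [e1, integral_pow_mul_indicator_Ioi _ hR]
  simp only [finrank_euclideanSpace_fin] at e2 ⊢
  have hk : ((2 * m + (d - 1) : ℕ) : ℝ) + 1 = 2 * ((m : ℝ) + d / 2) := by
    rw [← Nat.cast_add_one, show 2 * m + (d - 1) + 1 = 2 * m + d by lia]
    push_cast; ring
  have hp : 0 < (m : ℝ) + d / 2 := by positivity
  rw [show 2 * m + (d - 1) + 1 = 2 * m + d by lia, hk, Gamma_add_one hp.ne']
  rw [hk, mul_div_cancel_left₀ _ two_ne_zero] at e2
  have := (Gamma_pos_of_pos hp).ne'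
  rw [eq_div_iff (mul_ne_zero hp.ne' this)]
  generalize (m : ℝ) + d / 2 = p at *
  generalize ∫ ω : Metric.sphere (0 : EuclideanSpace ℝ (Fin d)) 1,
    inner ℝ (ω : EuclideanSpace ℝ (Fin d)) ξ ^ (2 * m) ∂volume.toSphere = s at *
  calc _ = R ^ (2 * m + d) * (s * (Gamma p / 2)) := by field_simp
    _ = _ := by rw [← e2]; ring

open scoped FourierTransform

lemma norm_integral_fourier_mul_gaussian_le {V : Type*} [NormedAddCommGroup V]
    [InnerProductSpace ℝ V] [MeasurableSpace V] [BorelSpace V] [FiniteDimensional ℝ V]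
    {f : V → ℂ} (hf : Integrable f) {C : ℝ} (hC : ∀ x, ‖f x‖ ≤ C) {b : ℝ} (hb : 0 < b) :
    ‖∫ ξ, 𝓕 f ξ * Complex.exp (-b * ‖ξ‖ ^ 2)‖ ≤ C := by
  have hb' : 0 < (b : ℂ).re := hb
  have hg : Integrable fun v : V ↦ Complex.exp (-b * ‖v‖ ^ 2) := by
    simpa using GaussianFourier.integrable_cexp_neg_mul_sq_norm_add hb' 0 (0 : V)
  have h := VectorFourier.integral_fourierIntegral_smul_eq_flip (L := innerₗ V)
    (μ := volume) (ν := volume) Real.continuous_fourierChar continuous_inner hf hg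
  have h2 : ∫ ξ, 𝓕 f ξ * Complex.exp (-b * ‖ξ‖ ^ 2) =
      ∫ x, f x * 𝓕 (fun v : V ↦ Complex.exp (-b * ‖v‖ ^ 2)) x := by
    rw [flip_innerₗ] at h
    exact h
  have hbπ : 0 < π ^ 2 / b := by positivity
  have hnorm (x : V) : ‖𝓕 (fun v : V ↦ Complex.exp (-b * ‖v‖ ^ 2)) x‖ =
      (π / b) ^ (Module.finrank ℝ V / 2 : ℝ) * exp (-(π ^ 2 / b) * ‖x‖ ^ 2) := by
    rw [fourier_gaussian_innerProductSpace hb', norm_mul, Complex.norm_exp]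
    congr 1
    · rw [← Complex.ofReal_div, ← Nat.cast_ofNat, ← Complex.ofReal_natCast,
        ← Complex.ofReal_natCast, ← Complex.ofReal_div,
        ← Complex.ofReal_cpow (by positivity), Complex.norm_of_nonneg (by positivity)]
      simp
    · congr 1
      rw [show -(π : ℂ) ^ 2 * ‖x‖ ^ 2 / b = ((-(π ^ 2 / b) * ‖x‖ ^ 2 : ℝ) : ℂ) by
        push_cast; ring, Complex.ofReal_re]
  have hint : Integrable fun x : V ↦ exp (-(π ^ 2 / b) * ‖x‖ ^ 2) := by
    have := (GaussianFourier.integrable_cexp_neg_mul_sq_norm_add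
      (b := ((π ^ 2 / b : ℝ) : ℂ)) hbπ 0 (0 : V)).norm
    refine this.congr (.of_forall fun x ↦ ?_)
    simp only [zero_mul, add_zero, Complex.norm_exp]
    congr 1
    rw [← Complex.ofReal_pow, ← Complex.ofReal_neg, ← Complex.ofReal_mul, Complex.ofReal_re]
  rw [h2]
  calc _ ≤ ∫ x : V, C * ((π / b) ^ (Module.finrank ℝ V / 2 : ℝ) *
          exp (-(π ^ 2 / b) * ‖x‖ ^ 2)) := by
        refine norm_integral_le_of_norm_le ((hint.const_mul _).const_mul _) (.of_forall fun x ↦ ?_)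
        rw [norm_mul, hnorm]
        exact mul_le_mul_of_nonneg_right (hC x) (by positivity)
    _ = C := by
        rw [integral_const_mul, integral_const_mul,
          GaussianFourier.integral_rexp_neg_mul_sq_norm hbπ,
          ← mul_rpow (by positivity) (by positivity),
          show π / b * (π / (π ^ 2 / b)) = 1 by field_simp, one_rpow, mul_one]

/-- A bounded integrable function with nonnegative Fourier transform has integrable Fourier
transform. -/
lemma integrable_of_fourier_nonneg {V : Type*} [NormedAddCommGroup V]
    [InnerProductSpace ℝ V] [MeasurableSpace V] [BorelSpace V] [FiniteDimensional ℝ V]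
    {f : V → ℂ} (hf : Integrable f) {C : ℝ} (hC : ∀ x, ‖f x‖ ≤ C) {p : V → ℝ}
    (hp : ∀ ξ, 0 ≤ p ξ) (hfp : ∀ ξ, 𝓕 f ξ = p ξ) : Integrable p := by
  have hcont : Continuous (𝓕 f) :=
    VectorFourier.fourierIntegral_continuous Real.continuous_fourierChar
      (by exact continuous_inner) hf
  have hpc : Continuous p := by
    have : p = fun ξ ↦ (𝓕 f ξ).re := by ext ξ; simp [hfp]
    rw [this]; exact Complex.continuous_re.comp hcont
  have hbound (ξ : V) : p ξ ≤ ∫ x, ‖f x‖ := by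
    have := VectorFourier.norm_fourierIntegral_le_integral_norm Real.fourierChar volume
      (innerₗ V) f ξ
    change ‖𝓕 f ξ‖ ≤ _ at this
    rwa [hfp, Complex.norm_of_nonneg (hp ξ)] at this
  let b : ℕ → ℝ := fun n ↦ 1 / (n + 1)
  have hb (n : ℕ) : 0 < b n := by positivity
  let G : ℕ → V → ℝ := fun n ξ ↦ p ξ * exp (-b n * ‖ξ‖ ^ 2)
  have hGc (n : ℕ) : Continuous (G n) := by fun_prop
  have hG0 (n : ℕ) (ξ : V) : 0 ≤ G n ξ := mul_nonneg (hp ξ) (exp_pos _).le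
  have hgauss (n : ℕ) : Integrable fun ξ : V ↦ exp (-b n * ‖ξ‖ ^ 2) := by
    have := (GaussianFourier.integrable_cexp_neg_mul_sq_norm_add
      (b := (b n : ℂ)) (hb n) 0 (0 : V)).norm
    refine this.congr (.of_forall fun x ↦ ?_)
    simp only [zero_mul, add_zero, Complex.norm_exp]
    congr 1
    rw [← Complex.ofReal_pow, ← Complex.ofReal_neg, ← Complex.ofReal_mul, Complex.ofReal_re]
  have hGi (n : ℕ) : Integrable (G n) := by
    refine (hgauss n).bdd_mul (c := ∫ x, ‖f x‖) hpc.aestronglyMeasurable (.of_forall fun ξ ↦ ?_)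
    rw [Real.norm_of_nonneg (hp ξ)]; exact hbound ξ
  have hGle (n : ℕ) : ∫ ξ, G n ξ ≤ C := by
    have := norm_integral_fourier_mul_gaussian_le hf hC (hb n)
    have h2 : ∫ ξ, 𝓕 f ξ * Complex.exp (-b n * ‖ξ‖ ^ 2) = ((∫ ξ, G n ξ : ℝ) : ℂ) := by
      rw [← integral_complex_ofReal]
      congr 1; ext ξ
      simp [G, hfp]
    rw [h2, Complex.norm_of_nonneg (integral_nonneg (hG0 n))] at this
    exact this
  have hlim (ξ : V) : Filter.Tendsto (fun n ↦ G n ξ) .atTop (nhds (p ξ)) := by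
    have h1 : Filter.Tendsto b .atTop (nhds 0) := tendsto_one_div_add_atTop_nhds_zero_nat
    have h2 : Continuous fun t : ℝ ↦ p ξ * exp (-t * ‖ξ‖ ^ 2) := by fun_prop
    have h3 := (h2.tendsto 0).comp h1
    simp only [neg_zero, zero_mul, exp_zero, mul_one] at h3
    exact h3
  refine ⟨hpc.aestronglyMeasurable, ?_⟩
  rw [hasFiniteIntegral_iff_ofReal (.of_forall hp)]
  calc ∫⁻ ξ, ENNReal.ofReal (p ξ)
      = ∫⁻ ξ, Filter.liminf (fun n ↦ ENNReal.ofReal (G n ξ)) .atTop := by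
        congr 1; ext ξ
        exact (ENNReal.continuous_ofReal.tendsto _ |>.comp (hlim ξ)).liminf_eq.symm
    _ ≤ Filter.liminf (fun n ↦ ∫⁻ ξ, ENNReal.ofReal (G n ξ)) .atTop :=
        lintegral_liminf_le fun n ↦ by fun_prop
    _ ≤ Filter.liminf (fun _ : ℕ ↦ ENNReal.ofReal C) .atTop := by
        refine Filter.liminf_le_liminf (.of_forall fun n ↦ ?_)
        rw [← ofReal_integral_eq_lintegral_ofReal (hGi n) (.of_forall (hG0 n))]
        exact ENNReal.ofReal_le_ofReal (hGle n)
    _ < ⊤ := by simp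

section Convolution

variable {d : ℕ} {f g : EuclideanSpace ℝ (Fin d) → ℝ}

lemma conv_eq_convolution (f g : EuclideanSpace ℝ (Fin d) → ℝ) :
    conv f g = convolution g f (ContinuousLinearMap.mul ℝ ℝ) volume := by
  ext x
  simp [conv, convolution, mul_comm]

lemma integrable_conv (hf : Integrable f) (hg : Integrable g) : Integrable (conv f g) := by
  rw [conv_eq_convolution]
  exact hg.integrable_convolution _ hf

lemma fourier_conv (hf : Integrable f) (hg : Integrable g) (ξ : EuclideanSpace ℝ (Fin d)) :
    𝓕 (fun x ↦ (conv f g x : ℂ)) ξ = 𝓕 (fun x ↦ (f x : ℂ)) ξ * 𝓕 (fun x ↦ (g x : ℂ)) ξ := by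
  have h : (fun x ↦ (conv f g x : ℂ)) = convolution (fun x ↦ (g x : ℂ)) (fun x ↦ (f x : ℂ))
      (ContinuousLinearMap.mul ℂ ℂ) volume := by
    ext x
    simp only [conv, convolution, ← integral_complex_ofReal]
    congr 1
    ext t
    simp [mul_comm]
  rw [h, Real.fourier_mul_convolution_eq (f₁ := fun x ↦ (g x : ℂ)) (f₂ := fun x ↦ (f x : ℂ))
    hg.ofReal hf.ofReal, mul_comm]

lemma integrable_indicator_ball (R : ℝ) :
    Integrable fun x : EuclideanSpace ℝ (Fin d) ↦ (if ‖x‖ < R then (1 : ℝ) else 0) := by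
  have h : IntegrableOn (fun _ : EuclideanSpace ℝ (Fin d) ↦ (1 : ℝ)) (Metric.ball 0 R) :=
    integrableOn_const measure_ball_lt_top.ne
  refine (h.integrable_indicator measurableSet_ball).congr (.of_forall fun x ↦ ?_)
  simp [Set.indicator]

lemma norm_indicator_ball_le (R : ℝ) (x : EuclideanSpace ℝ (Fin d)) :
    ‖(if ‖x‖ < R then (1 : ℝ) else 0)‖ ≤ 1 := by
  split_ifs <;> simp

lemma norm_conv_le (hf : Integrable f) (hg : ∀ x, ‖g x‖ ≤ 1) (x : EuclideanSpace ℝ (Fin d)) :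
    ‖conv f g x‖ ≤ ∫ u, ‖f u‖ := by
  rw [← integral_sub_left_eq_self (fun u ↦ ‖f u‖) volume x]
  refine norm_integral_le_of_norm_le (hf.norm.comp_sub_left x) (.of_forall fun u ↦ ?_)
  rw [norm_mul]
  exact mul_le_of_le_one_right (norm_nonneg _) (hg u)

lemma continuous_conv_indicator_ball (hf : Integrable f) {R : ℝ} (hR : 0 < R) :
    Continuous (conv f fun x ↦ if ‖x‖ < R then 1 else 0) := by
  have h1 : conv f (fun x ↦ if ‖x‖ < R then 1 else 0) =
      fun x ↦ ∫ u, f u * (if ‖x - u‖ < R then (1 : ℝ) else 0) := by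
    ext x
    rw [conv, ← integral_sub_left_eq_self
      (fun u ↦ f u * (if ‖x - u‖ < R then (1 : ℝ) else 0)) volume x]
    simp
  rw [h1, continuous_iff_continuousAt]
  intro x
  refine continuousAt_of_dominated (bound := fun u ↦ ‖f u‖) (.of_forall fun y ↦ ?_)
    (.of_forall fun y ↦ .of_forall fun u ↦ ?_) hf.norm ?_
  · exact hf.aestronglyMeasurable.mul
      ((integrable_indicator_ball R).comp_sub_left y).aestronglyMeasurable
  · rw [norm_mul]
    exact mul_le_of_le_one_right (norm_nonneg _) (norm_indicator_ball_le R _)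
  · have h0 : ∀ᵐ u, u ∉ Metric.sphere x R :=
      measure_eq_zero_iff_ae_notMem.1 (Measure.addHaar_sphere_of_ne_zero volume x hR.ne')
    filter_upwards [h0] with u hu
    have hu' : ‖x - u‖ ≠ R := by simpa [dist_eq_norm, norm_sub_rev] using hu
    have hc : Continuous fun y ↦ ‖y - u‖ := by fun_prop
    refine continuousAt_const.mul ?_
    rcases lt_or_gt_of_ne hu' with h | h
    · refine (continuousAt_const (y := (1 : ℝ))).congr ?_
      filter_upwards [hc.continuousAt.eventually_lt continuousAt_const h] with y hy
      simp [hy]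
    · refine (continuousAt_const (y := (0 : ℝ))).congr ?_
      filter_upwards [continuousAt_const.eventually_lt hc.continuousAt h] with y hy
      simp [hy.le]

lemma integrable_iterConv (hf : Integrable f) (k : ℕ) : Integrable (iterConv f k) := by
  induction k with
  | zero => exact hf
  | succ k ih => exact integrable_conv ih hf

lemma fourier_iterConv (hf : Integrable f) (k : ℕ) (ξ : EuclideanSpace ℝ (Fin d)) :
    𝓕 (fun x ↦ (iterConv f k x : ℂ)) ξ = 𝓕 (fun x ↦ (f x : ℂ)) ξ ^ (k + 1) := by
  induction k with
  | zero => simp [iterConv]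
  | succ k ih => rw [iterConv, fourier_conv (integrable_iterConv hf k) hf, ih, ← pow_succ]

end Convolution

/-- Fourier inversion at the origin for the iterated convolutions of the indicator of a ball. -/
lemma iterConv_indicator_ball_zero {d : ℕ} {R : ℝ} (hR : 0 < R)
    {H : EuclideanSpace ℝ (Fin d) → ℝ}
    (hH : ∀ ξ, 𝓕 (fun x : EuclideanSpace ℝ (Fin d) ↦
      ((if ‖x‖ < R then (1 : ℝ) else 0 : ℝ) : ℂ)) ξ = H ξ) {n : ℕ} (hn : 2 ≤ n) :
    iterConv (fun x : EuclideanSpace ℝ (Fin d) ↦ if ‖x‖ < R then (1 : ℝ) else 0) (n - 1) 0 =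
      ∫ ξ, H ξ ^ n := by
  set φ : EuclideanSpace ℝ (Fin d) → ℝ := fun x ↦ if ‖x‖ < R then (1 : ℝ) else 0
  have hφ : Integrable φ := integrable_indicator_ball R
  have hHc : Continuous H := by
    have : H = fun ξ ↦ (𝓕 (fun x ↦ (φ x : ℂ)) ξ).re := by ext ξ; simp [φ, hH]
    rw [this]
    exact Complex.continuous_re.comp (VectorFourier.fourierIntegral_continuous
      Real.continuous_fourierChar (by exact continuous_inner) hφ.ofReal)
  have hHb (ξ : EuclideanSpace ℝ (Fin d)) : ‖H ξ‖ ≤ ∫ x, ‖φ x‖ := by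
    have := VectorFourier.norm_fourierIntegral_le_integral_norm Real.fourierChar volume
      (innerₗ (EuclideanSpace ℝ (Fin d))) (fun x ↦ (φ x : ℂ)) ξ
    change ‖𝓕 (fun x ↦ (φ x : ℂ)) ξ‖ ≤ _ at this
    rw [hH, Complex.norm_real] at this
    simpa using this
  have hH2 : Integrable fun ξ ↦ H ξ ^ 2 := by
    refine integrable_of_fourier_nonneg (f := fun x ↦ (iterConv φ 1 x : ℂ))
      (C := ∫ x, ‖φ x‖) (integrable_iterConv hφ 1).ofReal (fun x ↦ ?_) (fun ξ ↦ sq_nonneg _)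
      (fun ξ ↦ ?_)
    · rw [Complex.norm_real]
      exact norm_conv_le hφ (norm_indicator_ball_le R) x
    · rw [fourier_iterConv hφ, hH]
      simp
  have hHn : Integrable fun ξ ↦ H ξ ^ n := by
    refine (hH2.bdd_mul (f := fun ξ ↦ H ξ ^ (n - 2)) (c := (∫ x, ‖φ x‖) ^ (n - 2))
      (by fun_prop) (.of_forall fun ξ ↦ ?_)).congr (.of_forall fun ξ ↦ ?_)
    · rw [norm_pow]
      gcongr
      exact hHb ξ
    · simp only [← pow_add, Nat.sub_add_cancel hn]
  have hF : 𝓕 (fun x ↦ (iterConv φ (n - 1) x : ℂ)) = fun ξ ↦ ((H ξ ^ n : ℝ) : ℂ) := by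
    ext ξ
    rw [fourier_iterConv hφ, hH, Nat.sub_add_cancel (by lia)]
    simp
  have hcont : Continuous (iterConv φ (n - 1)) := by
    obtain ⟨k, rfl⟩ : ∃ k, n = k + 2 := ⟨n - 2, by lia⟩
    exact continuous_conv_indicator_ball (integrable_iterConv hφ k) hR
  have hinv := Integrable.fourierInv_fourier_eq (f := fun x ↦ (iterConv φ (n - 1) x : ℂ))
    (v := 0) (integrable_iterConv hφ (n - 1)).ofReal (by rw [hF]; exact hHn.ofReal)
    (Complex.continuous_ofReal.comp hcont).continuousAt
  rw [hF, Real.fourierInv_eq] at hinv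
  simp only [inner_zero_right, AddChar.map_zero_eq_one, one_smul] at hinv
  rw [integral_complex_ofReal] at hinv
  exact_mod_cast hinv.symm

/-- The radial profile of the Fourier transform of the indicator of the ball of radius `R`. -/
noncomputable def ballFourierProfile (d : ℕ) (R r : ℝ) : ℝ :=
  ∑' m : ℕ, (-1 : ℝ) ^ m * (π * r) ^ (2 * m) * R ^ (2 * m + d) * √π ^ d /
    ((m.factorial : ℝ) * Gamma ((m : ℝ) + d / 2 + 1))

lemma Gamma_nat_add_half_mul_factorial (m : ℕ) :
    Gamma ((m : ℝ) + 1 / 2) * m.factorial * 2 ^ (2 * m) = (2 * m).factorial * √π := by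
  have h := Gamma_mul_Gamma_add_half ((m : ℝ) + 1 / 2)
  rw [show (m : ℝ) + 1 / 2 + 1 / 2 = m + 1 by ring, Gamma_nat_eq_factorial,
    show 2 * ((m : ℝ) + 1 / 2) = ((2 * m : ℕ) : ℝ) + 1 by push_cast; ring,
    Gamma_nat_eq_factorial, show 1 - (((2 * m : ℕ) : ℝ) + 1) = -((2 * m : ℕ) : ℝ) by ring,
    rpow_neg two_pos.le, rpow_natCast] at h
  rw [h]
  field_simp

lemma integral_cos_indicator_ball {d : ℕ} (hd : 0 < d) {R : ℝ} (hR : 0 < R)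
    (ξ : EuclideanSpace ℝ (Fin d)) :
    ∫ x : EuclideanSpace ℝ (Fin d), cos (2 * π * inner ℝ x ξ) * (if ‖x‖ < R then 1 else 0) =
      ballFourierProfile d R ‖ξ‖ := by
  set φ : EuclideanSpace ℝ (Fin d) → ℝ := fun x ↦ if ‖x‖ < R then (1 : ℝ) else 0
  have hφ : Integrable φ := integrable_indicator_ball R
  have h := hasSum_integral_of_dominated_convergence (μ := volume)
    (F := fun (m : ℕ) x ↦ (-1) ^ m * (2 * π * inner ℝ x ξ) ^ (2 * m) / (2 * m).factorial * φ x)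
    (f := fun x ↦ cos (2 * π * inner ℝ x ξ) * φ x)
    (fun m x ↦ (2 * π * (R * ‖ξ‖)) ^ (2 * m) / (2 * m).factorial * φ x)
    (fun m ↦ (Continuous.aestronglyMeasurable (by fun_prop)).mul hφ.aestronglyMeasurable)
    (fun m ↦ .of_forall fun x ↦ ?_) (.of_forall fun x ↦ ?_) ?_
    (.of_forall fun x ↦ (hasSum_cos _).mul_right _)
  · rw [ballFourierProfile, ← h.tsum_eq]
    congr 1
    ext m
    have hG := Gamma_nat_add_half_mul_factorial m
    have h1 (x : EuclideanSpace ℝ (Fin d)) :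
        (-1) ^ m * (2 * π * inner ℝ x ξ) ^ (2 * m) / (2 * m).factorial * φ x =
        ((-1) ^ m * (2 * π) ^ (2 * m) / (2 * m).factorial) *
          (inner ℝ x ξ ^ (2 * m) * if ‖x‖ < R then 1 else 0) := by
      simp only [φ, mul_pow]; ring
    simp_rw [h1]
    rw [integral_const_mul, integral_inner_pow_mul_indicator_ball hd hR]
    have hs : √π ^ d = √π ^ (d - 1) * √π := by rw [← pow_succ, Nat.sub_add_cancel hd]
    rw [div_mul_div_comm, div_eq_div_iff (by positivity) (by positivity), hs, mul_pow, mul_pow]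
    linear_combination ((-1) ^ m * π ^ (2 * m) * (‖ξ‖ ^ (2 * m) * R ^ (2 * m + d) * √π ^ (d - 1)) *
      Gamma ((m : ℝ) + d / 2 + 1)) * hG
  · simp only [φ]
    split_ifs with hx
    · have : |inner ℝ x ξ| ≤ R * ‖ξ‖ := (abs_real_inner_le_norm x ξ).trans (by gcongr)
      rw [mul_one, mul_one, norm_div, norm_mul, norm_pow, norm_pow, norm_neg, norm_one, one_pow,
        one_mul, norm_mul, Real.norm_of_nonneg (by positivity : 0 ≤ 2 * π), RCLike.norm_natCast,
        Real.norm_eq_abs]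
      gcongr
    · simp
  · exact ((summable_pow_div_factorial (2 * π * (R * ‖ξ‖))).comp_injective
      (i := fun m : ℕ ↦ 2 * m) (fun a b h ↦ by simpa using h)).mul_right _
  · simp_rw [tsum_mul_right]
    exact hφ.const_mul _

lemma fourier_indicator_ball {d : ℕ} (hd : 0 < d) {R : ℝ} (hR : 0 < R)
    (ξ : EuclideanSpace ℝ (Fin d)) :
    𝓕 (fun x : EuclideanSpace ℝ (Fin d) ↦ ((if ‖x‖ < R then (1 : ℝ) else 0 : ℝ) : ℂ)) ξ =
      (ballFourierProfile d R ‖ξ‖ : ℂ) := by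
  set φ : EuclideanSpace ℝ (Fin d) → ℝ := fun x ↦ if ‖x‖ < R then (1 : ℝ) else 0
  have hφ : Integrable φ := integrable_indicator_ball R
  have hbd (F : ℝ → ℝ) (hF : Continuous F) (hF1 : ∀ t, ‖F t‖ ≤ 1) :
      Integrable fun x ↦ F (2 * π * inner ℝ x ξ) * φ x :=
    hφ.bdd_mul (c := 1) (Continuous.aestronglyMeasurable (by fun_prop)) (.of_forall fun x ↦ hF1 _)
  have hs : ∫ x, sin (2 * π * inner ℝ x ξ) * φ x = 0 := by
    have := integral_neg_eq_self (fun x ↦ sin (2 * π * inner ℝ x ξ) * φ x) volume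
    simp only [inner_neg_left, mul_neg, sin_neg, φ, norm_neg, neg_mul, integral_neg] at this
    simp only [φ]
    linarith
  rw [Real.fourier_eq']
  have h1 (x : EuclideanSpace ℝ (Fin d)) :
      Complex.exp (((-2 * π * inner ℝ x ξ : ℝ) : ℂ) * Complex.I) • ((φ x : ℝ) : ℂ) =
      ((cos (2 * π * inner ℝ x ξ) * φ x : ℝ) : ℂ) -
        ((sin (2 * π * inner ℝ x ξ) * φ x : ℝ) : ℂ) * Complex.I := by
    rw [Complex.exp_mul_I, ← Complex.ofReal_cos, ← Complex.ofReal_sin, neg_mul, neg_mul, cos_neg,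
      sin_neg, smul_eq_mul]
    push_cast
    ring
  rw [integral_congr_ae (.of_forall h1), integral_sub (hbd cos continuous_cos abs_cos_le_one).ofReal
    ((hbd sin continuous_sin abs_sin_le_one).ofReal.mul_const _), integral_mul_const,
    integral_complex_ofReal, integral_complex_ofReal, hs, integral_cos_indicator_ball hd hR]
  simp

lemma ballFourierProfile_eq_besselJ (d : ℕ) {R r : ℝ} (hR : 0 < R) (hr : 0 < r) :
    ballFourierProfile d R r = (R / r) ^ ((d : ℝ) / 2) * besselJ (d / 2) (2 * π * R * r) := by
  rw [ballFourierProfile, besselJ, ← tsum_mul_left]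
  congr 1
  ext m
  have h0 : 0 < π * R * r := by positivity
  have h2 : R ^ ((d : ℝ) / 2) * R ^ ((d : ℝ) / 2) = R ^ d := by
    rw [← rpow_add hR, add_halves, rpow_natCast]
  have h3 : √π ^ d = π ^ ((d : ℝ) / 2) := by
    rw [sqrt_eq_rpow, ← rpow_natCast, ← rpow_mul pi_pos.le]; ring_nf
  rw [show 2 * π * R * r / 2 = π * R * r by ring, rpow_add h0,
    show (2 * (m : ℝ)) = ((2 * m : ℕ) : ℝ) by push_cast; rfl, rpow_natCast,
    div_rpow hR.le hr.le, mul_rpow (by positivity) hr.le, mul_rpow pi_pos.le hR.le, h3, pow_add,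
    ← h2, mul_pow, mul_pow, mul_pow]
  have : r ^ ((d : ℝ) / 2) ≠ 0 := by positivity
  field_simp

theorem stmt_17 (d : ℕ) (hd : 0 < d) (R : ℝ)
    (hR : R = π ^ (-(1 : ℝ) / 2) * Real.Gamma ((d : ℝ) / 2 + 1) ^ ((1 : ℝ) / (d : ℝ)))
    (φ : EuclideanSpace ℝ (Fin d) → ℝ)
    (hφ : φ = fun x => if ‖x‖ < R then 1 else 0)
    (n : ℕ) (hn : 3 ≤ n) :
    iterConv φ (n - 1) 0 =
      (d : ℝ) * (2 : ℝ) ^ ((d : ℝ) * ((n : ℝ) / 2 - 1)) *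
        Real.Gamma ((d : ℝ) / 2 + 1) ^ (n - 2) *
        ∫ x in Set.Ioi (0 : ℝ),
          x ^ (-1 - (d : ℝ) * ((n : ℝ) / 2 - 1)) * (besselJ ((d : ℝ) / 2) x) ^ n := by
  have : NeZero d := ⟨hd.ne'⟩
  have hΓ : 0 < Gamma ((d : ℝ) / 2 + 1) := Gamma_pos_of_pos (by positivity)
  have hR0 : 0 < R := by rw [hR]; positivity
  have hRd : R ^ (d : ℝ) = π ^ (-(d : ℝ) / 2) * Gamma ((d : ℝ) / 2 + 1) := by
    rw [hR, mul_rpow (by positivity) (by positivity), ← rpow_mul pi_pos.le, ← rpow_mul hΓ.le,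
      one_div_mul_cancel (by positivity), rpow_one]
    ring_nf
  have hvol : volume.real (Metric.ball (0 : EuclideanSpace ℝ (Fin d)) 1) =
      π ^ ((d : ℝ) / 2) / Gamma ((d : ℝ) / 2 + 1) := by
    rw [measureReal_def, EuclideanSpace.volume_ball]
    simp only [ENNReal.ofReal_one, one_pow, one_mul, Fintype.card_fin]
    rw [ENNReal.toReal_ofReal (by positivity), sqrt_eq_rpow, ← rpow_natCast,
      ← rpow_mul pi_pos.le]
    ring_nf
  rw [hφ, iterConv_indicator_ball_zero hR0 (fourier_indicator_ball hd hR0) (by lia),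
    integral_fun_norm_addHaar volume (fun r ↦ ballFourierProfile d R r ^ n)]
  simp only [finrank_euclideanSpace_fin, nsmul_eq_mul, smul_eq_mul]
  set e : ℝ := -1 - (d : ℝ) * ((n : ℝ) / 2 - 1)
  have hc : 0 < 2 * π * R := by positivity
  have hint : ∫ r in Set.Ioi (0 : ℝ), r ^ (d - 1) * ballFourierProfile d R r ^ n =
      R ^ ((d : ℝ) / 2 * n) * (2 * π * R) ^ (-e) * ((2 * π * R)⁻¹ *
        ∫ x in Set.Ioi (0 : ℝ), x ^ e * besselJ ((d : ℝ) / 2) x ^ n) := by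
    have := integral_comp_mul_left_Ioi (fun x ↦ x ^ e * besselJ ((d : ℝ) / 2) x ^ n) 0 hc
    rw [mul_zero, smul_eq_mul] at this
    rw [← this, ← integral_const_mul]
    refine setIntegral_congr_fun measurableSet_Ioi fun r hr ↦ ?_
    have hr : 0 < r := hr
    rw [ballFourierProfile_eq_besselJ d hR0 hr, mul_pow, ← rpow_natCast r, ← rpow_mul_natCast
      (by positivity), mul_rpow hc.le hr.le, rpow_neg hc.le, div_rpow hR0.le hr.le]
    have h1 : r ^ ((d - 1 : ℕ) : ℝ) = r ^ e * r ^ ((d : ℝ) / 2 * n) := by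
      rw [← rpow_add hr, Nat.cast_sub hd]
      congr 1
      simp only [e]
      push_cast
      ring
    rw [h1]
    have h2 : (2 * π * R) ^ e ≠ 0 := by positivity
    have h3 : r ^ ((d : ℝ) / 2 * n) ≠ 0 := by positivity
    field_simp
  rw [hint, hvol]
  have hpow : (2 * π * R) ^ (-e) * (2 * π * R)⁻¹ =
      (2 : ℝ) ^ ((d : ℝ) * ((n : ℝ) / 2 - 1)) * π ^ ((d : ℝ) * ((n : ℝ) / 2 - 1)) *
        R ^ ((d : ℝ) * ((n : ℝ) / 2 - 1)) := by
    rw [← mul_rpow two_pos.le pi_pos.le, ← mul_rpow (by positivity) hR0.le, ← rpow_neg_one,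
      ← rpow_add hc]
    congr 1
    simp only [e]
    ring
  have hRpow : R ^ ((d : ℝ) / 2 * n) * R ^ ((d : ℝ) * ((n : ℝ) / 2 - 1)) =
      π ^ (-((d : ℝ) / 2) * (n - 1 : ℕ)) * (Gamma ((d : ℝ) / 2 + 1) ^ (n - 2) *
        Gamma ((d : ℝ) / 2 + 1)) := by
    rw [← rpow_add hR0, ← pow_succ, show n - 2 + 1 = n - 1 by lia,
      show (d : ℝ) / 2 * n + d * (n / 2 - 1) = d * (n - 1 : ℕ) by
        rw [Nat.cast_sub (by lia)]; push_cast; ring,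
      rpow_mul_natCast hR0.le, hRd, mul_pow, ← rpow_mul_natCast pi_pos.le]
    ring_nf
  have hπ : π ^ ((d : ℝ) / 2) * π ^ ((d : ℝ) * ((n : ℝ) / 2 - 1)) *
      π ^ (-((d : ℝ) / 2) * (n - 1 : ℕ)) = 1 := by
    rw [← rpow_add pi_pos, ← rpow_add pi_pos, Nat.cast_sub (by lia)]
    convert rpow_zero π using 2
    push_cast
    ring
  set I := ∫ x in Set.Ioi (0 : ℝ), x ^ e * besselJ ((d : ℝ) / 2) x ^ n
  set G := Gamma ((d : ℝ) / 2 + 1)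
  set P := π ^ ((d : ℝ) / 2)
  set T := (2 : ℝ) ^ ((d : ℝ) * ((n : ℝ) / 2 - 1))
  calc _ = d * (P / G) * R ^ ((d : ℝ) / 2 * n) * ((2 * π * R) ^ (-e) * (2 * π * R)⁻¹) * I := by ring
    _ = d * (P / G) * T * π ^ ((d : ℝ) * ((n : ℝ) / 2 - 1)) *
        (R ^ ((d : ℝ) / 2 * n) * R ^ ((d : ℝ) * ((n : ℝ) / 2 - 1))) * I := by rw [hpow]; ring
    _ = (P * π ^ ((d : ℝ) * ((n : ℝ) / 2 - 1)) * π ^ (-((d : ℝ) / 2) * (n - 1 : ℕ))) *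
        (d * T * G ^ (n - 2) * I) := by rw [hRpow]; field_simp
    _ = _ := by rw [hπ, one_mul]
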